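/- Assume w_1 < b. Then the supremum of Obj over feasible vectors is attained, and there exist reals delta_1, ..., delta_m >= 0 with \sum_{i=1}^m delta_i = 1 such that the maximum of Obj over feasible x equals \sum_{i=1}^m delta_i * w_i * Fbar(w_i). That is, the optimal revenue of the public-budget problem is a convex combination of the revenues w_i * Fbar(w_i) of posted-price mechanisms at the values w_1, ..., w_m. -/

import Mathlib

/-!
Writing `d j = x j - x (j - 1) ≥ 0`, summation by parts (using `w 0 = 0`) turns
`w i * x i - Area_x(w i)` into `∑ j ≤ i, w j * d j`, so after exchanging sums
`Obj(x) = ∑ j, d j * R j` with `R j = w j * Fbar(w j)` the posted-price revenue at `w j`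
(`ObjP_eq`). The increments have total mass at most `1`, hence `Obj(x) ≤ max R`
(`ObjP_le_of_revenue_le`).

Every feasible vector can be changed beyond index `m`, without affecting feasibility or the
objective, so as to lie in the cube `[0, 1]^ℕ`. This cube is compact in the product topology, so the
maximum is attained (`exists_max_ObjP`). Since `w 1 < b`, the vector `(0, 1, …, 1)` is feasible, and
its objective is `R 1`. The optimum therefore lies between `R 1` and `max R`, and is a convex
combination of these two posted-price revenues.
-/

/-- `Area_x(w i) = ∑_{i' = 0}^{i-1} (w (i'+1) - w i') * x i'`. -/
def AreaP (w : ℕ → ℝ) (x : ℕ → ℝ) (i : ℕ) : ℝ :=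
  ∑ i' ∈ Finset.range i, (w (i' + 1) - w i') * x i'

/-- Feasibility for the finite public-budget program:
`0 ≤ x 0 ≤ x 1 ≤ ⋯ ≤ x m ≤ 1` and `w m * x m - Area_x(w m) ≤ b`. -/
def FeasP (m : ℕ) (w : ℕ → ℝ) (b : ℝ) (x : ℕ → ℝ) : Prop :=
  0 ≤ x 0 ∧ (∀ i < m, x i ≤ x (i + 1)) ∧ x m ≤ 1 ∧
  w m * x m - AreaP w x m ≤ b

/-- The public-budget objective `Obj(x) = ∑ i, f i * (w i * x i - Area_x(w i))`. -/
def ObjP (m : ℕ) (w : ℕ → ℝ) (f : ℕ → ℝ) (x : ℕ → ℝ) : ℝ :=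
  ∑ i ∈ Finset.Icc 1 m, f i * (w i * x i - AreaP w x i)

/-- The revenue of the posted-price mechanism at `w i`. -/
def revenueP (m : ℕ) (w f : ℕ → ℝ) (i : ℕ) : ℝ :=
  w i * ∑ i' ∈ Finset.Icc i m, f i'

/-- Summation by parts for a single payment. -/
lemma payment_eq (w x : ℕ → ℝ) (hw0 : w 0 = 0) (i : ℕ) :
    w i * x i - AreaP w x i = ∑ j ∈ Finset.Icc 1 i, w j * (x j - x (j - 1)) := by
  induction i with
  | zero => simp [AreaP, hw0]
  | succ n ih =>
    rw [Finset.sum_Icc_succ_top (by omega), ← ih]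
    simp only [AreaP, Finset.sum_range_succ, Nat.add_sub_cancel]
    ring

lemma ObjP_eq (m : ℕ) (w f x : ℕ → ℝ) (hw0 : w 0 = 0) :
    ObjP m w f x = ∑ j ∈ Finset.Icc 1 m, (x j - x (j - 1)) * revenueP m w f j := by
  simp only [ObjP, payment_eq w x hw0, revenueP, Finset.mul_sum]
  rw [Finset.sum_comm' (t' := Finset.Icc 1 m) (s' := fun j => Finset.Icc j m)]
  · refine Finset.sum_congr rfl fun j _ => Finset.sum_congr rfl fun i _ => ?_
    ring
  · intro i j
    simp only [Finset.mem_Icc]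
    omega

lemma sum_increments (x : ℕ → ℝ) (m : ℕ) :
    ∑ j ∈ Finset.Icc 1 m, (x j - x (j - 1)) = x m - x 0 := by
  induction m with
  | zero => simp
  | succ n ih =>
    rw [Finset.sum_Icc_succ_top (by omega), ih, Nat.add_sub_cancel]
    ring

lemma FeasP.mem_Icc {m : ℕ} {w x : ℕ → ℝ} {b : ℝ} (hx : FeasP m w b x) {i : ℕ} (hi : i ≤ m) :
    x i ∈ Set.Icc (0 : ℝ) 1 := by
  obtain ⟨h0, hmono, h1, -⟩ := hx
  constructor
  · induction i with
    | zero => exact h0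
    | succ n ih => exact (ih (by omega)).trans (hmono n (by omega))
  · induction hi using Nat.decreasingInduction with
    | self => exact h1
    | of_succ n hn ih => exact (hmono n hn).trans ih

/-- A nonnegative bound on all posted-price revenues bounds the objective, since the increments of
a feasible vector sum to at most `1`. -/
lemma ObjP_le_of_revenue_le {m : ℕ} {w f x : ℕ → ℝ} {b M : ℝ} (hw0 : w 0 = 0)
    (hx : FeasP m w b x) (hM : 0 ≤ M) (hR : ∀ j ∈ Finset.Icc 1 m, revenueP m w f j ≤ M) :
    ObjP m w f x ≤ M := by
  obtain ⟨h0, hmono, h1, -⟩ := hx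
  rw [ObjP_eq m w f x hw0]
  calc ∑ j ∈ Finset.Icc 1 m, (x j - x (j - 1)) * revenueP m w f j
      ≤ ∑ j ∈ Finset.Icc 1 m, (x j - x (j - 1)) * M := by
        refine Finset.sum_le_sum fun j hj => mul_le_mul_of_nonneg_left (hR j hj) ?_
        obtain ⟨hj1, hjm⟩ := Finset.mem_Icc.1 hj
        have h := hmono (j - 1) (by omega)
        rw [Nat.sub_add_cancel hj1] at h
        linarith
    _ = (x m - x 0) * M := by rw [← Finset.sum_mul, sum_increments]
    _ ≤ M := by nlinarith

lemma AreaP_congr {w x y : ℕ → ℝ} {m i : ℕ} (h : ∀ j ≤ m, x j = y j) (hi : i ≤ m) :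
    AreaP w x i = AreaP w y i := by
  refine Finset.sum_congr rfl fun j hj => ?_
  rw [h j (by have := Finset.mem_range.1 hj; omega)]

lemma ObjP_congr {m : ℕ} {w f x y : ℕ → ℝ} (h : ∀ j ≤ m, x j = y j) :
    ObjP m w f x = ObjP m w f y := by
  refine Finset.sum_congr rfl fun i hi => ?_
  have him := (Finset.mem_Icc.1 hi).2
  rw [h i him, AreaP_congr h him]

lemma FeasP.congr {m : ℕ} {w x y : ℕ → ℝ} {b : ℝ} (hx : FeasP m w b x)
    (h : ∀ j ≤ m, x j = y j) : FeasP m w b y := by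
  obtain ⟨h0, hmono, h1, hbud⟩ := hx
  refine ⟨h 0 (Nat.zero_le m) ▸ h0, fun i hi => ?_, h m le_rfl ▸ h1, ?_⟩
  · rw [← h i hi.le, ← h (i + 1) hi]
    exact hmono i hi
  · rw [← h m le_rfl, ← AreaP_congr h le_rfl]
    exact hbud

lemma continuous_AreaP (w : ℕ → ℝ) (i : ℕ) : Continuous fun x : ℕ → ℝ => AreaP w x i := by
  unfold AreaP
  fun_prop

lemma continuous_ObjP (m : ℕ) (w f : ℕ → ℝ) : Continuous (ObjP m w f) := by
  unfold ObjP AreaP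
  fun_prop

lemma isClosed_FeasP (m : ℕ) (w : ℕ → ℝ) (b : ℝ) : IsClosed {x : ℕ → ℝ | FeasP m w b x} := by
  have hA := continuous_AreaP w m
  have hmono : IsClosed {x : ℕ → ℝ | ∀ i < m, x i ≤ x (i + 1)} := by
    simp only [Set.ofPred_forall]
    exact isClosed_iInter fun i => isClosed_iInter fun _ =>
      isClosed_le (continuous_apply i) (continuous_apply (i + 1))
  exact (isClosed_le continuous_const (continuous_apply 0)).inter
    (hmono.inter ((isClosed_le (continuous_apply m) continuous_const).inter
      (isClosed_le (f := fun x : ℕ → ℝ => w m * x m - AreaP w x m) (by fun_prop)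
        continuous_const)))

/-- Attainment, by Tychonoff compactness of `[0, 1]^ℕ`. -/
lemma exists_max_ObjP {m : ℕ} {w : ℕ → ℝ} {b : ℝ} (f : ℕ → ℝ) (hne : ∃ x, FeasP m w b x) :
    ∃ xstar, FeasP m w b xstar ∧ ∀ x, FeasP m w b x → ObjP m w f x ≤ ObjP m w f xstar := by
  have key : ∀ x, FeasP m w b x → ∃ y ∈ (Set.univ.pi fun _ : ℕ => Set.Icc (0 : ℝ) 1) ∩
      {x | FeasP m w b x}, ObjP m w f x = ObjP m w f y := by
    intro x hx
    have h : ∀ j ≤ m, x j = x (min j m) := fun j hj => by rw [min_eq_left hj]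
    exact ⟨fun j => x (min j m), ⟨fun j _ => hx.mem_Icc (min_le_right j m), hx.congr h⟩,
      ObjP_congr h⟩
  have hcpt : IsCompact ((Set.univ.pi fun _ : ℕ => Set.Icc (0 : ℝ) 1) ∩
      {x | FeasP m w b x}) :=
    (isCompact_univ_pi fun _ => isCompact_Icc).inter_right (isClosed_FeasP m w b)
  obtain ⟨x₀, hx₀⟩ := hne
  obtain ⟨y₀, hy₀, -⟩ := key x₀ hx₀
  obtain ⟨z, hz, hmax⟩ := hcpt.exists_isMaxOn ⟨y₀, hy₀⟩ (continuous_ObjP m w f).continuousOn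
  refine ⟨z, hz.2, fun x hx => ?_⟩
  obtain ⟨y, hy, hxy⟩ := key x hx
  exact hxy ▸ hmax hy

/-- The payment of the step vector `(0, 1, 1, …)`, which posts the price `w 1`. -/
lemma payment_step (w : ℕ → ℝ) (hw0 : w 0 = 0) {i : ℕ} (hi : 1 ≤ i) :
    w i * (if i = 0 then 0 else 1) - AreaP w (fun j => if j = 0 then 0 else 1) i = w 1 := by
  rw [payment_eq w (fun j => if j = 0 then 0 else 1) hw0 i,
    Finset.sum_eq_single_of_mem 1 (Finset.mem_Icc.2 ⟨le_rfl, hi⟩)]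
  · simp
  · intro j hj hj1
    have := (Finset.mem_Icc.1 hj).1
    have h0 : j ≠ 0 := by omega
    have h1 : j - 1 ≠ 0 := by omega
    simp [h0, h1]

/-- If `w 1 < b`, the supremum of the public-budget objective over feasible vectors is
attained, and the optimal revenue is a convex combination
`∑ i, δ i * (w i * ∑_{i' = i}^{m} f i')` of the posted-price revenues at `w 1, …, w m`. -/
theorem stmt7
    (m : ℕ) (hm : 1 ≤ m) (w : ℕ → ℝ) (b : ℝ)
    (hw0 : w 0 = 0)
    (hwmono : ∀ i < m, w i < w (i + 1))
    (hb : 0 < b)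
    (f : ℕ → ℝ)
    (hf0 : ∀ i ∈ Finset.Icc 1 m, 0 ≤ f i)
    (hf1 : ∑ i ∈ Finset.Icc 1 m, f i = 1)
    (hw1b : w 1 < b) :
    ∃ xstar : ℕ → ℝ, FeasP m w b xstar ∧
      (∀ x : ℕ → ℝ, FeasP m w b x → ObjP m w f x ≤ ObjP m w f xstar) ∧
      ∃ δ : ℕ → ℝ,
        (∀ i ∈ Finset.Icc 1 m, 0 ≤ δ i) ∧
        (∑ i ∈ Finset.Icc 1 m, δ i = 1) ∧
        ObjP m w f xstar
          = ∑ i ∈ Finset.Icc 1 m, δ i * (w i * ∑ i' ∈ Finset.Icc i m, f i') := by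
  have hstep : FeasP m w b fun j => if j = 0 then 0 else 1 := by
    refine ⟨by simp, fun i _ => ?_, ?_, (payment_step w hw0 hm).trans_le hw1b.le⟩
    · dsimp only
      rw [if_neg (Nat.succ_ne_zero i)]
      split_ifs <;> norm_num
    · dsimp only
      split_ifs <;> norm_num
  obtain ⟨z, hz, hmax⟩ := exists_max_ObjP f ⟨_, hstep⟩
  have h1mem : 1 ∈ Finset.Icc 1 m := Finset.mem_Icc.2 ⟨le_rfl, hm⟩
  have hR1 : revenueP m w f 1 = w 1 := by rw [revenueP, hf1, mul_one]
  have hlow : revenueP m w f 1 ≤ ObjP m w f z := by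
    refine le_of_eq_of_le ?_ (hmax _ hstep)
    rw [revenueP, Finset.mul_sum, ObjP]
    refine Finset.sum_congr rfl fun i hi => ?_
    rw [payment_step w hw0 (Finset.mem_Icc.1 hi).1, mul_comm]
  obtain ⟨k, hk, hkmax⟩ := Finset.exists_max_image _ (revenueP m w f) ⟨1, h1mem⟩
  have hR1nonneg : 0 ≤ revenueP m w f 1 := by
    rw [hR1]
    have := hwmono 0 hm
    rw [hw0] at this
    exact this.le
  have hup : ObjP m w f z ≤ revenueP m w f k :=
    ObjP_le_of_revenue_le hw0 hz (hR1nonneg.trans (hkmax 1 h1mem)) hkmax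
  have hseg : ObjP m w f z ∈ segment ℝ (revenueP m w f 1) (revenueP m w f k) := by
    rw [segment_eq_Icc (hlow.trans hup)]
    exact ⟨hlow, hup⟩
  obtain ⟨s, t, hs, ht, hst, hval⟩ := hseg
  refine ⟨z, hz, hmax, fun i => (if i = 1 then s else 0) + (if i = k then t else 0), ?_, ?_, ?_⟩
  · intro i _
    dsimp only
    split_ifs <;> linarith
  · rw [Finset.sum_add_distrib, Finset.sum_ite_eq', Finset.sum_ite_eq', if_pos h1mem, if_pos hk,
      hst]
  · rw [← hval]
    simp only [add_mul, ite_mul, zero_mul]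
    rw [Finset.sum_add_distrib, Finset.sum_ite_eq', Finset.sum_ite_eq', if_pos h1mem, if_pos hk]
    rfl
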